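/- Let (f,g) be a Möbius pair of complex-valued arithmetic functions, not both identically zero. If the support of g is evaporating, then the support of f possesses a positive asymptotic density. -/

import Mathlib

open Filter

open scoped Classical in
noncomputable def countIn (A : Set ℕ) (x : ℕ) : ℕ :=
  ((Finset.Icc 1 x).filter (fun n => n ∈ A)).card

/-- `A ⊆ ℕ` has asymptotic density `δ`. -/
def HasDensity (A : Set ℕ) (δ : ℝ) : Prop :=
  Tendsto (fun x : ℕ => (countIn A x : ℝ) / x) atTop (nhds δ)

/-- The upper (asymptotic) density of `A ⊆ ℕ`. -/
noncomputable def upperDensity (A : Set ℕ) : ℝ :=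
  limsup (fun x : ℕ => (countIn A x : ℝ) / x) atTop

/-- `A` is evaporating: the upper density of the set of `n` with a divisor in
`A ∩ [T,∞)` tends to `0` as `T → ∞`. -/
def Evaporating (A : Set ℕ) : Prop :=
  Tendsto (fun T : ℕ => upperDensity {n : ℕ | 0 < n ∧ ∃ a ∈ A, T ≤ a ∧ a ∣ n})
    atTop (nhds 0)

/-- `(f,g)` is a Möbius pair: `f(n) = ∑_{d ∣ n} g(d)` for all positive `n`. -/
def MobiusPair (f g : ℕ → ℂ) : Prop :=
  ∀ n : ℕ, 0 < n → f n = ∑ d ∈ n.divisors, g d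

/-!
Fix `m` with `f m ∈ S`, where `S` is any set of values. Discarding the divisors `d ≥ T` changes
`f` only on multiples of large elements of `supp g`, a set of small upper density, and turns `f`
into a function with period `T!`; hence `f ⁻¹' S` is a limit of periodic sets and has a density.
This density is positive because `f (m * k) = f m` as soon as every `a ∈ supp g` dividing `m * k`
already divides `m`, that is, as soon as `k` is divisible by none of the numbers `a / gcd a m` with
`a ∈ supp g`, `a ∤ m`. These numbers form an evaporating set not containing `1`, and sieving by such
a set leaves a positive density: its tail removes density less than `1`, and each of the finitely
many remaining elements `t ≥ 2` lowers the density by at most the factor `1 - 1 / t`.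
-/

section Counting

variable {X Y E : Set ℕ}

lemma countIn_mono (h : ∀ n, 0 < n → n ∈ X → n ∈ Y) (x : ℕ) : countIn X x ≤ countIn Y x := by
  classical
  refine Finset.card_le_card fun n hn => ?_
  rw [Finset.mem_filter] at hn ⊢
  exact ⟨hn.1, h n (Finset.mem_Icc.1 hn.1).1 hn.2⟩

lemma countIn_union_le (X Y : Set ℕ) (x : ℕ) : countIn (X ∪ Y) x ≤ countIn X x + countIn Y x := by
  classical
  simp only [countIn, Set.mem_union, Finset.filter_or]
  exact Finset.card_union_le _ _

lemma countIn_univ (x : ℕ) : countIn Set.univ x = x := by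
  simp [countIn]

lemma countIn_div_le_one (X : Set ℕ) (x : ℕ) : (countIn X x : ℝ) / x ≤ 1 := by
  refine div_le_one_of_le₀ ?_ x.cast_nonneg
  exact_mod_cast (countIn_mono (fun _ _ _ => Set.mem_univ _) x).trans_eq (countIn_univ x)

lemma abs_countIn_div_sub_le (h : ∀ n, 0 < n → n ∉ E → (n ∈ X ↔ n ∈ Y)) (x : ℕ) :
    |(countIn X x : ℝ) / x - countIn Y x / x| ≤ countIn E x / x := by
  have hXY : countIn X x ≤ countIn Y x + countIn E x :=
    (countIn_mono (fun n hn hX => or_iff_not_imp_right.2 fun hE => (h n hn hE).1 hX) x).trans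
      (countIn_union_le Y E x)
  have hYX : countIn Y x ≤ countIn X x + countIn E x :=
    (countIn_mono (fun n hn hY => or_iff_not_imp_right.2 fun hE => (h n hn hE).2 hY) x).trans
      (countIn_union_le X E x)
  rw [← sub_div, abs_div, Nat.abs_cast]
  gcongr
  rw [abs_sub_le_iff, sub_le_iff_le_add', sub_le_iff_le_add']
  exact ⟨by exact_mod_cast hXY, by exact_mod_cast hYX⟩

lemma countIn_image_mul {m : ℕ} (hm : 0 < m) (X : Set ℕ) (x : ℕ) :
    countIn ((m * ·) '' X) x = countIn X (x / m) := by
  classical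
  have hle (k : ℕ) : k ≤ x / m ↔ m * k ≤ x := by rw [Nat.le_div_iff_mul_le hm, mul_comm]
  symm
  refine Finset.card_bij (fun k _ => m * k) (fun k hk => ?_)
    (fun _ _ _ _ h => Nat.eq_of_mul_eq_mul_left hm h) fun n hn => ?_
  · obtain ⟨hkx, hkX⟩ := Finset.mem_filter.1 hk
    obtain ⟨hk0, hkx⟩ := Finset.mem_Icc.1 hkx
    exact Finset.mem_filter.2 ⟨Finset.mem_Icc.2
      ⟨Nat.mul_pos hm hk0, (hle k).1 hkx⟩, k, hkX, rfl⟩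
  · obtain ⟨hnx, k, hkX, rfl⟩ := Finset.mem_filter.1 hn
    obtain ⟨hn0, hnx⟩ := Finset.mem_Icc.1 hnx
    exact ⟨k, Finset.mem_filter.2 ⟨Finset.mem_Icc.2
      ⟨Nat.pos_of_mul_pos_left hn0, (hle k).2 hnx⟩, hkX⟩, rfl⟩

lemma countIn_add_of_periodic {L : ℕ} (hX : Function.Periodic (· ∈ X) L) (x : ℕ) :
    countIn X (x + L) = countIn X x + countIn X L := by
  classical
  have hIco (y : ℕ) : countIn X y = ((Finset.Ico 1 (1 + y)).filter (· ∈ X)).card := by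
    rw [countIn, add_comm]
    rfl
  have hsplit : Finset.Ico 1 (1 + (x + L)) =
      Finset.Ico 1 (1 + x) ∪ Finset.Ico (1 + x) (1 + x + L) := by
    rw [Finset.Ico_union_Ico_eq_Ico (by omega) (by omega), add_assoc]
  rw [hIco, hIco, hIco, hsplit, Finset.filter_union, Finset.card_union_of_disjoint
    (Finset.disjoint_filter_filter (Finset.Ico_disjoint_Ico_consecutive _ _ _)),
    Nat.filter_Ico_card_eq_of_periodic _ _ _ hX, Nat.filter_Ico_card_eq_of_periodic _ _ _ hX]

end Counting

section Density

variable {X Y Z : Set ℕ} {δ δ' δ'' : ℝ}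

lemma HasDensity.mono (hX : HasDensity X δ) (hY : HasDensity Y δ') (h : X ⊆ Y) : δ ≤ δ' := by
  refine le_of_tendsto_of_tendsto' hX hY fun x => ?_
  gcongr
  exact countIn_mono (fun n _ hn => h hn) x

lemma HasDensity.le_add_of_subset_union (hX : HasDensity X δ) (hY : HasDensity Y δ')
    (hZ : HasDensity Z δ'') (h : X ⊆ Y ∪ Z) : δ ≤ δ' + δ'' := by
  refine le_of_tendsto_of_tendsto' hX (hY.add hZ) fun x => ?_
  rw [← add_div]
  gcongr
  exact_mod_cast (countIn_mono (fun n _ hn => h hn) x).trans (countIn_union_le Y Z x)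

lemma HasDensity.congr (hX : HasDensity X δ) (h : ∀ n, 0 < n → (n ∈ X ↔ n ∈ Y)) :
    HasDensity Y δ :=
  Tendsto.congr (fun x => by
    rw [(countIn_mono (fun n hn => (h n hn).1) x).antisymm
      (countIn_mono (fun n hn => (h n hn).2) x)]) hX

lemma HasDensity.image_mul (hX : HasDensity X δ) {m : ℕ} (hm : 0 < m) :
    HasDensity ((m * ·) '' X) (δ / m) := by
  have hcount : Tendsto (fun x : ℕ => (countIn X (x / m) : ℝ) / (x / m : ℕ)) atTop (nhds δ) :=
    hX.comp (Nat.tendsto_div_const_atTop hm.ne')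
  have hfloor : Tendsto (fun x : ℕ => ((x / m : ℕ) : ℝ) / x) atTop (nhds (m : ℝ)⁻¹) := by
    refine ((tendsto_nat_floor_mul_div_atTop (R := ℝ) (a := (m : ℝ)⁻¹) (by positivity)).comp
      tendsto_natCast_atTop_atTop).congr fun x => ?_
    rw [Function.comp_apply, inv_mul_eq_div, Nat.floor_div_natCast, Nat.floor_natCast]
  refine (hcount.mul hfloor).congr' ?_
  filter_upwards [eventually_ge_atTop m] with x hx
  have hdiv : ((x / m : ℕ) : ℝ) ≠ 0 := by exact_mod_cast (Nat.div_pos hx hm).ne'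
  rw [countIn_image_mul hm, div_mul_div_cancel₀ hdiv]

lemma hasDensity_of_periodic {L : ℕ} (hL : 0 < L) (hX : Function.Periodic (· ∈ X) L) :
    HasDensity X (countIn X L / L) := by
  set c : ℝ := countIn X L / L with hc
  let r : ℕ → ℝ := fun x => countIn X x - x * c
  have hr : Function.Periodic r L := fun x => by
    simp only [r, hc, countIn_add_of_periodic hX]
    push_cast
    field_simp
    ring
  have hbound (x : ℕ) : ‖r x‖ ≤ ∑ i ∈ Finset.range L, ‖r i‖ := by
    rw [← hr.map_mod_nat x]
    exact Finset.single_le_sum (f := fun i => ‖r i‖) (fun i _ => norm_nonneg _)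
      (Finset.mem_range.2 (Nat.mod_lt x hL))
  have hzero : Tendsto (fun x : ℕ => r x / x) atTop (nhds 0) := by
    refine squeeze_zero_norm (fun x => ?_)
      (tendsto_const_div_atTop_nhds_zero_nat (∑ i ∈ Finset.range L, ‖r i‖))
    rw [norm_div, Real.norm_natCast]
    gcongr
    exact hbound x
  have hlim := hzero.add_const c
  rw [zero_add] at hlim
  refine hlim.congr' ?_
  filter_upwards [eventually_ne_atTop 0] with x hx
  simp only [r]
  field_simp
  ring

end Density

section UpperDensity

variable {X Y E : Set ℕ} {c δ : ℝ}

lemma eventually_countIn_div_lt (h : upperDensity X < c) :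
    ∀ᶠ x : ℕ in atTop, (countIn X x : ℝ) / x < c :=
  eventually_lt_of_limsup_lt h (isBoundedUnder_of ⟨1, countIn_div_le_one X⟩)

lemma isCoboundedUnder_countIn_div (X : Set ℕ) :
    IsCoboundedUnder (· ≤ ·) atTop (fun x : ℕ => (countIn X x : ℝ) / x) :=
  (isBoundedUnder_of ⟨0, fun _ => by positivity⟩).isCoboundedUnder_le

lemma upperDensity_nonneg (X : Set ℕ) : 0 ≤ upperDensity X :=
  le_limsup_of_frequently_le (Frequently.of_forall fun _ => by positivity)
    (isBoundedUnder_of ⟨1, countIn_div_le_one X⟩)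

lemma upperDensity_mono (h : X ⊆ Y) : upperDensity X ≤ upperDensity Y := by
  refine limsup_le_limsup (Eventually.of_forall fun x => ?_) (isCoboundedUnder_countIn_div X)
    (isBoundedUnder_of ⟨1, countIn_div_le_one Y⟩)
  dsimp only
  gcongr
  exact countIn_mono (fun n _ hn => h hn) x

lemma upperDensity_le_mul_upperDensity_image_mul {m : ℕ} (hm : 0 < m) (X : Set ℕ) :
    upperDensity X ≤ m * upperDensity ((m * ·) '' X) := by
  have hm' : (0 : ℝ) < m := by exact_mod_cast hm
  rw [← div_le_iff₀' hm']
  refine le_of_forall_gt_imp_ge_of_dense fun c hc => (div_le_iff₀' hm').2 ?_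
  refine limsup_le_of_le (isCoboundedUnder_countIn_div X) ?_
  have hdilate : Tendsto (fun x : ℕ => m * x) atTop atTop := tendsto_id.const_mul_atTop' hm
  filter_upwards [hdilate.eventually (eventually_countIn_div_lt hc)] with x hx
  rw [countIn_image_mul hm, Nat.mul_div_cancel_left x hm, Nat.cast_mul, mul_comm (m : ℝ),
    ← div_div, div_lt_iff₀' hm'] at hx
  exact hx.le

lemma exists_hasDensity_of_approx
    (h : ∀ ε : ℝ, 0 < ε → ∃ Y E : Set ℕ, (∃ δ, HasDensity Y δ) ∧ upperDensity E < ε ∧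
      ∀ n, 0 < n → n ∉ E → (n ∈ X ↔ n ∈ Y)) :
    ∃ δ, HasDensity X δ := by
  refine cauchySeq_tendsto_of_complete (Metric.cauchySeq_iff'.2 fun ε hε => ?_)
  obtain ⟨Y, E, ⟨δ, hδ⟩, hE, hXY⟩ := h (ε / 4) (by positivity)
  have hclose : ∀ᶠ x : ℕ in atTop, dist ((countIn X x : ℝ) / x) δ < ε / 2 := by
    filter_upwards [Metric.tendsto_nhds.1 hδ (ε / 4) (by positivity),
      eventually_countIn_div_lt hE] with x hYx hEx
    have hXx := abs_countIn_div_sub_le hXY x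
    rw [← Real.dist_eq] at hXx
    linarith [dist_triangle ((countIn X x : ℝ) / x) (countIn Y x / x) δ]
  obtain ⟨N, hN⟩ := eventually_atTop.1 hclose
  refine ⟨N, fun n hn => ?_⟩
  linarith [dist_triangle_right ((countIn X n : ℝ) / n) (countIn X N / N) δ, hN n hn, hN N le_rfl]

lemma HasDensity.one_le_add_upperDensity (hX : HasDensity X δ)
    (h : ∀ n, 0 < n → n ∈ X ∨ n ∈ E) : 1 ≤ δ + upperDensity E := by
  rw [← sub_le_iff_le_add']
  refine le_of_forall_gt_imp_ge_of_dense fun c hc => ?_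
  rw [sub_le_comm]
  refine ge_of_tendsto hX ?_
  filter_upwards [eventually_countIn_div_lt hc, eventually_ne_atTop 0] with x hEx hx
  have hcover : (x : ℝ) ≤ countIn X x + countIn E x := by
    exact_mod_cast (countIn_univ x).symm.trans_le
      ((countIn_mono (fun n hn _ => h n hn) x).trans (countIn_union_le X E x))
  have hone : 1 ≤ (countIn X x : ℝ) / x + countIn E x / x := by
    rwa [← add_div, one_le_div (by positivity)]
  linarith

end UpperDensity

section Evaporating

variable {A B : Set ℕ}

/-- The set of multiples of `A`, restricted to positive integers as in the definition of
`Evaporating`. -/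
def multiples (A : Set ℕ) : Set ℕ := {n | 0 < n ∧ ∃ a ∈ A, a ∣ n}

/-- The positive integers that survive the sieve by `A`, i.e. are divisible by no element of it. -/
def nonmultiples (A : Set ℕ) : Set ℕ := {n | 0 < n ∧ ∀ a ∈ A, ¬ a ∣ n}

lemma multiples_mono (h : A ⊆ B) : multiples A ⊆ multiples B :=
  fun _ ⟨hn, a, ha, han⟩ => ⟨hn, a, h ha, han⟩

lemma mem_nonmultiples_or_mem_multiples (A : Set ℕ) {n : ℕ} (hn : 0 < n) :
    n ∈ nonmultiples A ∨ n ∈ multiples A := by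
  by_cases h : ∃ a ∈ A, a ∣ n
  · exact .inr ⟨hn, h⟩
  · exact .inl ⟨hn, fun a ha han => h ⟨a, ha, han⟩⟩

lemma nonmultiples_subset_union_image_mul (A : Set ℕ) (t : ℕ) :
    nonmultiples A ⊆ nonmultiples (insert t A) ∪ (t * ·) '' nonmultiples A := by
  rintro n ⟨hn, hnA⟩
  by_cases htn : t ∣ n
  · obtain ⟨k, rfl⟩ := htn
    exact .inr ⟨k, ⟨Nat.pos_of_mul_pos_left hn, fun a ha hak => hnA a ha (hak.mul_left t)⟩, rfl⟩
  · exact .inl ⟨hn, Set.forall_mem_insert.2 ⟨htn, hnA⟩⟩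

lemma evaporating_iff : Evaporating A ↔
    Tendsto (fun T : ℕ => upperDensity (multiples (A ∩ Set.Ici T))) atTop (nhds 0) := by
  simp only [Evaporating, multiples, Set.mem_inter_iff, Set.mem_Ici, and_assoc]

lemma Evaporating.exists_upperDensity_lt (hA : Evaporating A) {ε : ℝ} (hε : 0 < ε) :
    ∃ T : ℕ, upperDensity (multiples (A ∩ Set.Ici T)) < ε :=
  ((evaporating_iff.1 hA).eventually_lt_const hε).exists

lemma Evaporating.mono (hB : Evaporating B) (h : A ⊆ B) : Evaporating A :=
  evaporating_iff.2 <| squeeze_zero (fun _ => upperDensity_nonneg _)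
    (fun _ => upperDensity_mono (multiples_mono (Set.inter_subset_inter_left _ h)))
    (evaporating_iff.1 hB)

lemma div_gcd_dvd_iff_dvd_mul {a m : ℕ} (hm : 0 < m) (k : ℕ) : a / a.gcd m ∣ k ↔ a ∣ m * k := by
  rw [Nat.div_dvd_iff_dvd_mul (a.gcd_dvd_left m) (a.gcd_pos_of_pos_right hm),
    Nat.dvd_gcd_mul_iff_dvd_mul]

lemma Evaporating.image_div_gcd (hA : Evaporating A) {m : ℕ} (hm : 0 < m) :
    Evaporating ((fun a => a / a.gcd m) '' A) := by
  have hdilate (T : ℕ) : (m * ·) '' multiples ((fun a => a / a.gcd m) '' A ∩ Set.Ici T) ⊆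
      multiples (A ∩ Set.Ici T) := by
    rintro _ ⟨k, ⟨hk, _, ⟨⟨a, ha, rfl⟩, hT⟩, hak⟩, rfl⟩
    exact ⟨Nat.mul_pos hm hk, a, ⟨ha, hT.trans (a.div_le_self _)⟩,
      (div_gcd_dvd_iff_dvd_mul hm k).1 hak⟩
  have hlim := (evaporating_iff.1 hA).const_mul (m : ℝ)
  rw [mul_zero] at hlim
  refine evaporating_iff.2 (squeeze_zero (fun _ => upperDensity_nonneg _) (fun T => ?_) hlim)
  refine (upperDensity_le_mul_upperDensity_image_mul hm _).trans ?_
  gcongr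
  exact upperDensity_mono (hdilate T)

end Evaporating

section DivisorSums

variable {M : Type*} [AddCommMonoid M] {f g : ℕ → M}

lemma periodic_sum_filter_dvd (g : ℕ → M) (T : ℕ) :
    Function.Periodic (fun n => ∑ d ∈ Finset.Ico 1 T with d ∣ n, g d) T.factorial := by
  intro n
  refine Finset.sum_congr (Finset.filter_congr fun d hd => ?_) fun _ _ => rfl
  obtain ⟨hd0, hdT⟩ := Finset.mem_Ico.1 hd
  exact Nat.dvd_add_left (Nat.dvd_factorial hd0 hdT.le)

lemma sum_divisors_eq_sum_filter_dvd {n T : ℕ} (hn : 0 < n)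
    (hnT : n ∉ multiples (g.support ∩ Set.Ici T)) :
    ∑ d ∈ n.divisors, g d = ∑ d ∈ Finset.Ico 1 T with d ∣ n, g d := by
  symm
  refine Finset.sum_subset (fun d hd => ?_) fun d hd hdT => ?_
  · exact Nat.mem_divisors.2 ⟨(Finset.mem_filter.1 hd).2, hn.ne'⟩
  · have hdn := Nat.dvd_of_mem_divisors hd
    by_contra hgd
    refine hnT ⟨hn, d, ⟨hgd, Set.mem_Ici.2 (le_of_not_gt fun hlt => hdT ?_)⟩, hdn⟩
    exact Finset.mem_filter.2
      ⟨Finset.mem_Ico.2 ⟨Nat.pos_of_mem_divisors hd, hlt⟩, hdn⟩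

lemma exists_hasDensity_preimage (hfg : ∀ n, 0 < n → f n = ∑ d ∈ n.divisors, g d)
    (hg : Evaporating g.support) (S : Set M) : ∃ δ, HasDensity (f ⁻¹' S) δ := by
  refine exists_hasDensity_of_approx fun ε hε => ?_
  obtain ⟨T, hT⟩ := hg.exists_upperDensity_lt hε
  refine ⟨(fun n => ∑ d ∈ Finset.Ico 1 T with d ∣ n, g d) ⁻¹' S, _,
    ⟨_, hasDensity_of_periodic T.factorial_pos ?_⟩, hT, fun n hn hnT => ?_⟩
  · exact (periodic_sum_filter_dvd g T).comp (· ∈ S)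
  · rw [Set.mem_preimage, Set.mem_preimage, hfg n hn, sum_divisors_eq_sum_filter_dvd hn hnT]

lemma sum_divisors_mul_eq {m k : ℕ} (hmk : 0 < m * k)
    (h : ∀ a ∈ g.support, a ∣ m * k → a ∣ m) :
    ∑ d ∈ (m * k).divisors, g d = ∑ d ∈ m.divisors, g d := by
  symm
  refine Finset.sum_subset (Nat.divisors_subset_of_dvd hmk.ne' (dvd_mul_right m k))
    fun d hd hdm => ?_
  by_contra hgd
  exact hdm (Nat.mem_divisors.2
    ⟨h d hgd (Nat.dvd_of_mem_divisors hd), (Nat.pos_of_mul_pos_right hmk).ne'⟩)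

end DivisorSums

section Sieve

variable {A : Set ℕ}

lemma Evaporating.exists_hasDensity_nonmultiples (hA : Evaporating A) :
    ∃ δ, HasDensity (nonmultiples A) δ := by
  classical
  let g : ℕ → ℕ := A.indicator 1
  have hg : g.support = A := by simp [g]
  obtain ⟨δ, hδ⟩ := exists_hasDensity_preimage (f := fun n => ∑ d ∈ n.divisors, g d)
    (fun _ _ => rfl) (hg.symm ▸ hA) {0}
  refine ⟨δ, hδ.congr fun n hn => ?_⟩
  simp only [g, nonmultiples, Set.mem_preimage, Set.mem_singleton_iff, Finset.sum_eq_zero_iff,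
    Set.indicator_apply_eq_zero, Pi.one_apply, one_ne_zero, imp_false, Nat.mem_divisors,
    Set.mem_ofPred_eq, hn, hn.ne', ne_eq, not_false_eq_true, and_true, true_and]
  exact forall_congr' fun a => imp_not_comm

lemma nonmultiples_insert_zero (A : Set ℕ) : nonmultiples (insert 0 A) = nonmultiples A := by
  ext n
  simp only [nonmultiples, Set.mem_ofPred_eq, Set.forall_mem_insert, zero_dvd_iff]
  exact and_congr_right fun hn => and_iff_right hn.ne'

lemma Evaporating.exists_pos_hasDensity_nonmultiples_insert {t : ℕ} (ht : t ≠ 1)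
    (hA : Evaporating (insert t A)) (h : ∃ δ, 0 < δ ∧ HasDensity (nonmultiples A) δ) :
    ∃ δ, 0 < δ ∧ HasDensity (nonmultiples (insert t A)) δ := by
  rcases Nat.eq_zero_or_pos t with rfl | ht₀
  · rwa [nonmultiples_insert_zero]
  obtain ⟨δ, hpos, hδ⟩ := h
  obtain ⟨δ', hδ'⟩ := hA.exists_hasDensity_nonmultiples
  have hle : δ ≤ δ' + δ / t := hδ.le_add_of_subset_union hδ' (hδ.image_mul ht₀)
    (nonmultiples_subset_union_image_mul A t)
  have hlt : δ / t < δ := div_lt_self hpos (by exact_mod_cast (by omega : 1 < t))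
  exact ⟨δ', by linarith, hδ'⟩

lemma Evaporating.exists_pos_hasDensity_nonmultiples (hA : Evaporating A) (hA₁ : 1 ∉ A) :
    ∃ δ, 0 < δ ∧ HasDensity (nonmultiples A) δ := by
  obtain ⟨T, hT⟩ := hA.exists_upperDensity_lt one_pos
  have htail : ∃ δ, 0 < δ ∧ HasDensity (nonmultiples (A ∩ Set.Ici T)) δ := by
    obtain ⟨δ, hδ⟩ := (hA.mono Set.inter_subset_left).exists_hasDensity_nonmultiples
    have hle := hδ.one_le_add_upperDensity fun n hn => mem_nonmultiples_or_mem_multiples _ hn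
    exact ⟨δ, by linarith, hδ⟩
  clear hT
  induction T with
  | zero => simpa using htail
  | succ t ih =>
    refine ih ?_
    rw [Set.Ici_add_one_eq_Ioi] at htail
    rw [← Set.Ioi_insert]
    by_cases ht : t ∈ A
    · rw [Set.inter_insert_of_mem ht]
      refine exists_pos_hasDensity_nonmultiples_insert (ne_of_mem_of_not_mem ht hA₁)
        (hA.mono (Set.insert_subset ht Set.inter_subset_left)) htail
    · rwa [Set.inter_insert_of_notMem ht]

end Sieve

lemma MobiusPair.exists_ne_zero {f g : ℕ → ℂ} (hfg : MobiusPair f g)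
    (hne : ∃ n : ℕ, 0 < n ∧ (f n ≠ 0 ∨ g n ≠ 0)) : ∃ n, 0 < n ∧ f n ≠ 0 := by
  by_contra! hf
  obtain ⟨n, hn, hfn | hgn⟩ := hne
  · exact hfn (hf n hn)
  · refine hgn ?_
    rw [← ArithmeticFunction.sum_eq_iff_sum_smul_moebius_eq.1 (fun n hn => (hfg n hn).symm) n hn]
    refine Finset.sum_eq_zero fun x hx => ?_
    rw [hf _ (Nat.pos_of_mem_divisors (Nat.snd_mem_divisors_of_mem_antidiagonal hx)), smul_zero]

theorem mobius_pair_evaporating_supp_g_density_supp_f_general {M : Type*} [AddCommMonoid M]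
    {f g : ℕ → M} (hfg : ∀ n, 0 < n → f n = ∑ d ∈ n.divisors, g d)
    (hg : Evaporating g.support) {S : Set M} (hS : ∃ m, 0 < m ∧ f m ∈ S) :
    ∃ δ : ℝ, 0 < δ ∧ HasDensity (f ⁻¹' S) δ := by
  obtain ⟨m, hm, hfm⟩ := hS
  obtain ⟨δ, hδ⟩ := exists_hasDensity_preimage hfg hg S
  let A : Set ℕ := {a ∈ g.support | ¬ a ∣ m}
  have hA : Evaporating ((fun a => a / a.gcd m) '' A) :=
    (hg.mono (Set.sep_subset _ _)).image_div_gcd hm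
  have hA₁ : 1 ∉ (fun a => a / a.gcd m) '' A := by
    rintro ⟨a, ⟨-, ham⟩, ha⟩
    exact ham (by simpa using (div_gcd_dvd_iff_dvd_mul hm 1).1 ha.dvd)
  obtain ⟨δ', hpos, hδ'⟩ := hA.exists_pos_hasDensity_nonmultiples hA₁
  have hsub : (m * ·) '' nonmultiples ((fun a => a / a.gcd m) '' A) ⊆ f ⁻¹' S := by
    rintro _ ⟨k, ⟨hk, hkA⟩, rfl⟩
    have hmk : 0 < m * k := Nat.mul_pos hm hk
    rw [Set.mem_preimage, hfg _ hmk, sum_divisors_mul_eq hmk, ← hfg m hm]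
    · exact hfm
    · intro a ha hamk
      by_contra ham
      exact hkA _ ⟨a, ⟨ha, ham⟩, rfl⟩ ((div_gcd_dvd_iff_dvd_mul hm k).2 hamk)
  have hm' : (0 : ℝ) < m := by exact_mod_cast hm
  exact ⟨δ, (div_pos hpos hm').trans_le ((hδ'.image_mul hm).mono hδ hsub), hδ⟩

/-- If `(f,g)` is a nonzero Möbius pair and `supp g` is evaporating, then `supp f`
has a positive asymptotic density. -/
theorem mobius_pair_evaporating_supp_g_density_supp_f (f g : ℕ → ℂ)
    (hfg : MobiusPair f g) (hne : ∃ n : ℕ, 0 < n ∧ (f n ≠ 0 ∨ g n ≠ 0))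
    (hev : Evaporating {n : ℕ | g n ≠ 0}) :
    ∃ δ : ℝ, 0 < δ ∧ HasDensity {n : ℕ | f n ≠ 0} δ :=
  mobius_pair_evaporating_supp_g_density_supp_f_general hfg hev (S := {0}ᶜ)
    (hfg.exists_ne_zero hne)
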